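/- Fix integers 0 ≤ q < d and let P be a stationary and ergodic probability measure on Ω = [0,1]^{K^d} whose marginal distribution functions F^Q(t) = P(ω_Q ≤ t) are continuous on [0,1] for every Q ∈ K^d. Then the function β̂_q(t) := limsup_{n→∞} |Λ_n|^{−1} E[β_q^n(t)] is uniformly continuous on [0,1]. -/

import Mathlib

open MeasureTheory Filter Topology

noncomputable section

/-- An elementary cube in `ℝ^d`: the `i`-th component is the elementary interval
`[l, l+1]` if the Boolean is `true` (nondegenerate) and `[l, l]` if `false` (degenerate). -/
abbrev ElemCube (d : ℕ) := Fin d → ℤ × Bool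

/-- The dimension of an elementary cube: the number of nondegenerate components. -/
def cubeDim {d : ℕ} (Q : ElemCube d) : ℕ :=
  (Finset.univ.filter fun i => (Q i).2 = true).card

/-- The geometric realization of an elementary cube as a subset of `ℝ^d`. -/
def cubeSet {d : ℕ} (Q : ElemCube d) : Set (Fin d → ℝ) :=
  {x | ∀ i, x i ∈ Set.Icc ((Q i).1 : ℝ) ((Q i).1 + (if (Q i).2 then 1 else 0))}

/-- A cubical set is a union of elementary cubes. -/
def IsCubical {d : ℕ} (X : Set (Fin d → ℝ)) : Prop :=
  ∃ S : Set (ElemCube d), X = ⋃ Q ∈ S, cubeSet Q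

/-- The free `ℤ`-module generated by all elementary cubes of `ℝ^d` (all dimensions mixed). -/
abbrev CubChain (d : ℕ) := ElemCube d →₀ ℤ

/-- The cubical boundary of a single elementary cube, defined by induction on the ambient
dimension, following the inductive definition: in `ℝ¹`, `∂ [l,l+1]^ = [l+1]^ - [l]^` and
`∂ Q̂ = 0` for degenerate `Q`; and for `Q = I × P`,
`∂ Q̂ = (∂ Î) ⋄ P̂ + (-1)^(dim I) Î ⋄ (∂ P̂)`, where `⋄` is the cubical product. -/
def boundaryCube : (d : ℕ) → ElemCube d → CubChain d
  | 0, _ => 0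
  | d + 1, Q =>
      (if (Q 0).2 then
          Finsupp.single (Fin.cons ((Q 0).1 + 1, false) (fun i => Q i.succ)) (1 : ℤ)
            - Finsupp.single (Fin.cons ((Q 0).1, false) (fun i => Q i.succ)) (1 : ℤ)
        else 0)
      + (if (Q 0).2 then (-1 : ℤ) else 1) •
          (boundaryCube d (fun i => Q i.succ)).sum
            (fun R n => Finsupp.single (Fin.cons (Q 0) R) n)

/-- The cubical boundary operator, the `ℤ`-linear extension of `boundaryCube`. -/
def boundaryHom (d : ℕ) : CubChain d →ₗ[ℤ] CubChain d :=
  Finsupp.lsum ℤ fun Q => LinearMap.toSpanSingleton ℤ (CubChain d) (boundaryCube d Q)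

/-- `C_k^d(X)`: the submodule of chains supported on the `k`-dimensional elementary cubes
contained in `X`. -/
def chainsOn (d k : ℕ) (X : Set (Fin d → ℝ)) : Submodule ℤ (CubChain d) :=
  Finsupp.supported ℤ ℤ {Q : ElemCube d | cubeDim Q = k ∧ cubeSet Q ⊆ X}

/-- `Z_q(X) = ker ∂_q^X`, the cycles of the cubical set `X` in degree `q`. -/
def cycleMod (d q : ℕ) (X : Set (Fin d → ℝ)) : Submodule ℤ (CubChain d) :=
  chainsOn d q X ⊓ LinearMap.ker (boundaryHom d)

/-- `B_q(X) = im ∂_{q+1}^X`, the boundaries of the cubical set `X` in degree `q`. -/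
def boundaryMod (d q : ℕ) (X : Set (Fin d → ℝ)) : Submodule ℤ (CubChain d) :=
  Submodule.map (boundaryHom d) (chainsOn d (q + 1) X)

/-- The `q`-th Betti number of a cubical set: the rank of the free part of the `q`-th
cubical homology `H_q(X) = Z_q(X) / B_q(X)`. -/
def betti (d q : ℕ) (X : Set (Fin d → ℝ)) : ℕ :=
  Module.finrank ℤ
    (↥(cycleMod d q X) ⧸ (boundaryMod d q X).comap (cycleMod d q X).subtype)

/-- `Λ_n = [-n, n]^d ⊆ ℝ^d`. -/
def lambda (d n : ℕ) : Set (Fin d → ℝ) := {x | ∀ i, x i ∈ Set.Icc (-(n : ℝ)) n}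

/-- The configuration space `Ω = [0,1]^{K^d}` with the product σ-field. -/
abbrev Config (d : ℕ) := ElemCube d → unitInterval

/-- Translation of an elementary cube by `x ∈ ℤ^d`. -/
def translateCube {d : ℕ} (x : Fin d → ℤ) (Q : ElemCube d) : ElemCube d :=
  fun i => ((Q i).1 + x i, (Q i).2)

/-- The translation action `τ_x` on configurations: `(τ_x ω)_Q = ω_{-x+Q}`. -/
def configShift {d : ℕ} (x : Fin d → ℤ) (ω : Config d) : Config d :=
  fun Q => ω (translateCube (-x) Q)

/-- Stationarity of a measure on configuration space: `P(τ_x⁻¹ A) = P(A)`. -/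
def Stationary {d : ℕ} (P : Measure (Config d)) : Prop :=
  ∀ (x : Fin d → ℤ) (A : Set (Config d)), MeasurableSet A → P (configShift x ⁻¹' A) = P A

/-- Ergodicity of a measure on configuration space under translations. -/
def ErgodicConfig {d : ℕ} (P : Measure (Config d)) : Prop :=
  ∀ A : Set (Config d), MeasurableSet A →
    (∀ x : Fin d → ℤ, configShift x ⁻¹' A = A) → P A = 0 ∨ P A = 1

/-- The random cubical set `X(t) = ⋃ {Q ∈ K^d : ω_Q ≤ t}`. -/
def cubSet {d : ℕ} (ω : Config d) (t : ℝ) : Set (Fin d → ℝ) :=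
  ⋃ Q ∈ {Q : ElemCube d | (ω Q : ℝ) ≤ t}, cubeSet Q

/-- `β_q^n(t)(ω) = β_q(X(t) ∩ Λ_n)`. -/
def bettiN (d q n : ℕ) (t : ℝ) (ω : Config d) : ℕ :=
  betti d q (cubSet ω t ∩ lambda d n)

/-- `β̂_q(t) := limsup_{n → ∞} |Λ_n|⁻¹ E[β_q^n(t)]`, where `|Λ_n| = (2n)^d`. -/
def betaHat (d q : ℕ) (P : Measure (Config d)) (t : ℝ) : ℝ :=
  limsup (fun n : ℕ => ((2 * (n : ℝ)) ^ d)⁻¹ * ∫ ω, (bettiN d q n t ω : ℝ) ∂P) atTop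

/-!
Enlarging a cubical set raises `β_q` by at most the number of new `q`-cubes and lowers it by at
most the number of new `(q+1)`-cubes. A cube of `Λ_n` lies in `X(t)` but not in `X(s)`, `s ≤ t`,
only if one of the at most `3^d` cubes `Q'` containing it has `s < ω_{Q'} ≤ t`. By stationarity this
has probability at most `Φ(t) - Φ(s)`, where `Φ` is the sum of the `2^d` distinct marginal
distribution functions. As `Λ_n` has `O(|Λ_n|)` cubes, this gives
`|β̂_q(t) - β̂_q(s)| ≤ 9^d |Φ(t) - Φ(s)|`, and `Φ` is uniformly continuous on compact sets.
-/

section SubmoduleRank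

universe u v

variable {R : Type u} {M : Type v} [Ring R] [AddCommGroup M] [Module R M]

theorem finrank_comap_subtype (A B : Submodule R M) :
    Module.finrank R (B.comap A.subtype) = Module.finrank R ↥(A ⊓ B) := by
  rw [(Submodule.equivSubtypeMap A (B.comap A.subtype)).finrank_eq, Submodule.map_comap_subtype]

/-- The rank of `(C ∩ ker f) / f(D)`: the abstract form of a Betti number, with `C` and `D` the
chains of degree `q` and `q + 1` and `f` the differential. The image `f(D)` is intersected with
`C ∩ ker f` rather than required to lie in it. -/
def homologyRank (f : M →ₗ[R] M) (C D : Submodule R M) : ℕ :=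
  Module.finrank R (↥(C ⊓ LinearMap.ker f) ⧸ (D.map f).comap (C ⊓ LinearMap.ker f).subtype)

variable [StrongRankCondition R]

theorem homologyRank_le_finrank (f : M →ₗ[R] M) {C : Submodule R M} [IsNoetherian R C]
    (D : Submodule R M) :
    homologyRank f C D ≤ Module.finrank R C := by
  have : IsNoetherian R ↥(C ⊓ LinearMap.ker f) := isNoetherian_of_le inf_le_left
  exact (Submodule.finrank_quotient_le _).trans (Submodule.finrank_mono inf_le_left)

variable [HasRankNullity.{v} R]

theorem finrank_sup_add_finrank_inf (A B : Submodule R M) [IsNoetherian R A] [IsNoetherian R B] :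
    Module.finrank R ↥(A ⊔ B) + Module.finrank R ↥(A ⊓ B) =
      Module.finrank R A + Module.finrank R B := by
  have : IsNoetherian R ↥(A ⊓ B) := isNoetherian_of_le inf_le_left
  have hrank := Submodule.rank_sup_add_rank_inf_eq A B
  simp only [← Module.finrank_eq_rank] at hrank
  exact_mod_cast hrank

theorem finrank_quotient_comap_subtype_add (Z B : Submodule R M) [IsNoetherian R Z] :
    Module.finrank R (Z ⧸ B.comap Z.subtype) + Module.finrank R ↥(Z ⊓ B) =
      Module.finrank R Z := by
  rw [← finrank_comap_subtype, Submodule.finrank_quotient_add_finrank]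

theorem finrank_map_add_finrank_inf_ker (f : M →ₗ[R] M) (A : Submodule R M) [IsNoetherian R A] :
    Module.finrank R (A.map f) + Module.finrank R ↥(A ⊓ LinearMap.ker f) = Module.finrank R A := by
  rw [← LinearMap.range_domRestrict, ← (f.domRestrict A).quotKerEquivRange.finrank_eq,
    LinearMap.ker_domRestrict, ← finrank_comap_subtype]
  exact Submodule.finrank_quotient_add_finrank _

theorem finrank_inf_add_finrank_le {A A' : Submodule R M} [IsNoetherian R A'] (hA : A ≤ A')
    (K : Submodule R M) :
    Module.finrank R ↥(A' ⊓ K) + Module.finrank R A ≤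
      Module.finrank R ↥(A ⊓ K) + Module.finrank R A' := by
  have : IsNoetherian R A := isNoetherian_of_le hA
  have : IsNoetherian R ↥(A' ⊓ K) := isNoetherian_of_le inf_le_left
  have hsup : Module.finrank R ↥(A' ⊓ K ⊔ A) ≤ Module.finrank R A' :=
    Submodule.finrank_mono (sup_le inf_le_left hA)
  have hinf : A' ⊓ K ⊓ A = A ⊓ K := by rw [inf_right_comm, inf_eq_right.2 hA]
  have hsum := finrank_sup_add_finrank_inf (A' ⊓ K) A
  rw [hinf] at hsum
  lia

variable {Z Z' B B' : Submodule R M}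

theorem finrank_quotient_add_finrank_numerator_le [IsNoetherian R Z'] (hZ : Z ≤ Z') (hB : B ≤ B') :
    Module.finrank R (Z' ⧸ B'.comap Z'.subtype) + Module.finrank R Z ≤
      Module.finrank R (Z ⧸ B.comap Z.subtype) + Module.finrank R Z' := by
  have : IsNoetherian R Z := isNoetherian_of_le hZ
  have : IsNoetherian R ↥(Z' ⊓ B') := isNoetherian_of_le inf_le_left
  have hquot := finrank_quotient_comap_subtype_add Z B
  have hquot' := finrank_quotient_comap_subtype_add Z' B'
  have hinf := Submodule.finrank_mono (inf_le_inf hZ hB)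
  lia

theorem finrank_quotient_add_finrank_denominator_le [IsNoetherian R Z'] [IsNoetherian R B']
    (hZ : Z ≤ Z') (hB : B ≤ B') :
    Module.finrank R (Z ⧸ B.comap Z.subtype) + Module.finrank R B ≤
      Module.finrank R (Z' ⧸ B'.comap Z'.subtype) + Module.finrank R B' := by
  have : IsNoetherian R Z := isNoetherian_of_le hZ
  have : IsNoetherian R B := isNoetherian_of_le hB
  have hquot := finrank_quotient_comap_subtype_add Z B
  have hquot' := finrank_quotient_comap_subtype_add Z' B'
  have hsum := finrank_sup_add_finrank_inf Z B
  have hsum' := finrank_sup_add_finrank_inf Z' B'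
  have hsup := Submodule.finrank_mono (sup_le_sup hZ hB)
  lia

variable (f : M →ₗ[R] M) {C C' D D' : Submodule R M}

theorem homologyRank_add_finrank_left_le [IsNoetherian R C'] (hC : C ≤ C') (hD : D ≤ D') :
    homologyRank f C' D' + Module.finrank R C ≤ homologyRank f C D + Module.finrank R C' := by
  have : IsNoetherian R ↥(C' ⊓ LinearMap.ker f) := isNoetherian_of_le inf_le_left
  have hcycles := finrank_inf_add_finrank_le hC (LinearMap.ker f)
  have hquot := finrank_quotient_add_finrank_numerator_le
    (inf_le_inf_right (LinearMap.ker f) hC) (Submodule.map_mono (f := f) hD)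
  unfold homologyRank
  lia

theorem homologyRank_add_finrank_right_le [IsNoetherian R C'] [IsNoetherian R D']
    (hC : C ≤ C') (hD : D ≤ D') :
    homologyRank f C D + Module.finrank R D ≤ homologyRank f C' D' + Module.finrank R D' := by
  have : IsNoetherian R D := isNoetherian_of_le hD
  have : IsNoetherian R ↥(C' ⊓ LinearMap.ker f) := isNoetherian_of_le inf_le_left
  have : IsNoetherian R ↥(D' ⊓ LinearMap.ker f) := isNoetherian_of_le inf_le_left
  have hquot := finrank_quotient_add_finrank_denominator_le
    (inf_le_inf_right (LinearMap.ker f) hC) (Submodule.map_mono (f := f) hD)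
  have hker := Submodule.finrank_mono (inf_le_inf_right (LinearMap.ker f) hD)
  have himage := finrank_map_add_finrank_inf_ker f D
  have himage' := finrank_map_add_finrank_inf_ker f D'
  unfold homologyRank
  lia

end SubmoduleRank

section BettiMono

variable {d : ℕ}

/-- The `k`-dimensional elementary cubes contained in `X`, which generate `chainsOn d k X`. -/
def cubesIn (d k : ℕ) (X : Set (Fin d → ℝ)) : Set (ElemCube d) :=
  {Q | cubeDim Q = k ∧ cubeSet Q ⊆ X}

theorem cubesIn_mono (k : ℕ) {X Y : Set (Fin d → ℝ)} (hXY : X ⊆ Y) :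
    cubesIn d k X ⊆ cubesIn d k Y :=
  fun _ hQ => ⟨hQ.1, hQ.2.trans hXY⟩

theorem chainsOn_eq_supported_cubesIn (k : ℕ) (X : Set (Fin d → ℝ)) :
    chainsOn d k X = Finsupp.supported ℤ ℤ (cubesIn d k X) :=
  rfl

theorem chainsOn_mono (k : ℕ) {X Y : Set (Fin d → ℝ)} (hXY : X ⊆ Y) :
    chainsOn d k X ≤ chainsOn d k Y :=
  Finsupp.supported_mono (cubesIn_mono k hXY)

theorem isNoetherian_chainsOn {k : ℕ} {X : Set (Fin d → ℝ)} (hX : (cubesIn d k X).Finite) :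
    IsNoetherian ℤ (chainsOn d k X) := by
  have := hX.to_subtype
  exact isNoetherian_of_linearEquiv (Finsupp.supportedEquivFinsupp (cubesIn d k X)).symm

theorem finrank_chainsOn {k : ℕ} {X : Set (Fin d → ℝ)} (hX : (cubesIn d k X).Finite) :
    Module.finrank ℤ (chainsOn d k X) = (cubesIn d k X).ncard := by
  have := hX.fintype
  rw [chainsOn_eq_supported_cubesIn, (Finsupp.supportedEquivFinsupp _).finrank_eq,
    Module.finrank_finsupp_self, ← Nat.card_eq_fintype_card, Nat.card_coe_set_eq]

theorem finrank_chainsOn_eq_add_ncard_sdiff {k : ℕ} {X Y : Set (Fin d → ℝ)} (hXY : X ⊆ Y)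
    (hY : (cubesIn d k Y).Finite) :
    Module.finrank ℤ (chainsOn d k Y) =
      Module.finrank ℤ (chainsOn d k X) + (cubesIn d k Y \ cubesIn d k X).ncard := by
  have hsub := cubesIn_mono k hXY
  rw [finrank_chainsOn hY, finrank_chainsOn (hY.subset hsub), add_comm,
    Set.ncard_sdiff_add_ncard_of_subset hsub hY]

theorem betti_eq_homologyRank (q : ℕ) (X : Set (Fin d → ℝ)) :
    betti d q X = homologyRank (boundaryHom d) (chainsOn d q X) (chainsOn d (q + 1) X) :=
  rfl

theorem betti_le_ncard_cubesIn {q : ℕ} {X : Set (Fin d → ℝ)} (hX : (cubesIn d q X).Finite) :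
    betti d q X ≤ (cubesIn d q X).ncard := by
  have := isNoetherian_chainsOn hX
  rw [← finrank_chainsOn hX]
  exact homologyRank_le_finrank _ _

theorem betti_le_betti_add_ncard_of_subset {q : ℕ} {X Y : Set (Fin d → ℝ)} (hXY : X ⊆ Y)
    (hY : (cubesIn d q Y).Finite) :
    betti d q Y ≤ betti d q X + (cubesIn d q Y \ cubesIn d q X).ncard := by
  have := isNoetherian_chainsOn hY
  have hrank := homologyRank_add_finrank_left_le (boundaryHom d)
    (chainsOn_mono q hXY) (chainsOn_mono (q + 1) hXY)
  rw [finrank_chainsOn_eq_add_ncard_sdiff hXY hY] at hrank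
  simp only [betti_eq_homologyRank]
  lia

theorem betti_le_betti_add_ncard_succ_of_subset {q : ℕ} {X Y : Set (Fin d → ℝ)} (hXY : X ⊆ Y)
    (hY : (cubesIn d q Y).Finite) (hY' : (cubesIn d (q + 1) Y).Finite) :
    betti d q X ≤ betti d q Y + (cubesIn d (q + 1) Y \ cubesIn d (q + 1) X).ncard := by
  have := isNoetherian_chainsOn hY
  have := isNoetherian_chainsOn hY'
  have hrank := homologyRank_add_finrank_right_le (boundaryHom d)
    (chainsOn_mono q hXY) (chainsOn_mono (q + 1) hXY)
  rw [finrank_chainsOn_eq_add_ncard_sdiff hXY hY'] at hrank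
  simp only [betti_eq_homologyRank]
  lia

end BettiMono

section Cofaces

/-- The elementary interval encoded by one component of an `ElemCube`. -/
def elemInterval (I : ℤ × Bool) : Set ℝ :=
  Set.Icc (I.1 : ℝ) (I.1 + (if I.2 then 1 else 0))

/-- The midpoint of an elementary interval. -/
def intervalMidpoint (I : ℤ × Bool) : ℝ :=
  I.1 + (if I.2 then 1 / 2 else 0)

/-- The elementary intervals containing a given one: only the interval itself if it is
nondegenerate, and the point together with its two unit neighbours if it is degenerate. -/
def intervalCofaces (I : ℤ × Bool) : Finset (ℤ × Bool) :=
  if I.2 then {I} else {I, (I.1, true), (I.1 - 1, true)}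

theorem intervalMidpoint_mem (I : ℤ × Bool) : intervalMidpoint I ∈ elemInterval I := by
  rcases I with ⟨l, _ | _⟩ <;> norm_num [intervalMidpoint, elemInterval]

theorem mem_intervalCofaces_of_intervalMidpoint_mem {I J : ℤ × Bool}
    (h : intervalMidpoint I ∈ elemInterval J) : J ∈ intervalCofaces I := by
  rcases I with ⟨l, bl⟩
  rcases J with ⟨m, bm⟩
  obtain ⟨hlower, hupper⟩ := h
  simp only [intervalMidpoint] at hlower hupper
  have hlower_int : 2 * m ≤ 2 * l + if bl then 1 else 0 := by
    have : (2 * m : ℝ) ≤ 2 * l + if bl then 1 else 0 := by split_ifs at * <;> linarith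
    exact_mod_cast this
  have hupper_int : (2 * l + if bl then 1 else 0) ≤ 2 * m + if bm then 2 else 0 := by
    have : (2 * l + if bl then 1 else 0 : ℝ) ≤ 2 * m + if bm then 2 else 0 := by
      split_ifs at * <;> linarith
    exact_mod_cast this
  cases bl <;> cases bm <;> simp [intervalCofaces] at * <;> lia

theorem elemInterval_subset_of_mem_intervalCofaces {I J : ℤ × Bool} (h : J ∈ intervalCofaces I) :
    elemInterval I ⊆ elemInterval J := by
  rcases I with ⟨l, _ | _⟩
  · simp only [intervalCofaces, Bool.false_eq_true, if_false, Finset.mem_insert,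
      Finset.mem_singleton] at h
    rcases h with rfl | rfl | rfl <;> simp [elemInterval]
  · simp only [intervalCofaces, if_true, Finset.mem_singleton] at h
    rw [h]

theorem card_intervalCofaces_le (I : ℤ × Bool) : (intervalCofaces I).card ≤ 3 := by
  unfold intervalCofaces
  split_ifs
  · simp
  · exact Finset.card_le_three

variable {d : ℕ}

/-- The elementary cubes containing `Q`. -/
def cofaces (Q : ElemCube d) : Finset (ElemCube d) :=
  Fintype.piFinset fun i => intervalCofaces (Q i)

theorem card_cofaces_le (Q : ElemCube d) : (cofaces Q).card ≤ 3 ^ d :=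
  calc (cofaces Q).card = ∏ i, (intervalCofaces (Q i)).card := Fintype.card_piFinset _
    _ ≤ ∏ _i : Fin d, 3 := Finset.prod_le_prod' fun i _ => card_intervalCofaces_le (Q i)
    _ = 3 ^ d := by simp

/- A cube lies in a union of cubes as soon as its centre does, because every elementary cube that
contains the centre contains the whole cube. -/
theorem cubeSet_subset_cubSet_iff (Q : ElemCube d) (ω : Config d) (t : ℝ) :
    cubeSet Q ⊆ cubSet ω t ↔ ∃ Q' ∈ cofaces Q, (ω Q' : ℝ) ≤ t := by
  simp only [cubSet, Set.mem_ofPred_eq]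
  constructor
  · intro hQ
    have hcentre : (fun i => intervalMidpoint (Q i)) ∈ cubeSet Q :=
      fun i => intervalMidpoint_mem (Q i)
    obtain ⟨Q', hle, hmem⟩ := Set.mem_iUnion₂.1 (hQ hcentre)
    exact ⟨Q', Fintype.mem_piFinset.2 fun i =>
      mem_intervalCofaces_of_intervalMidpoint_mem (hmem i), hle⟩
  · rintro ⟨Q', hmem, hle⟩ x hx
    exact Set.mem_iUnion₂.2 ⟨Q', hle, fun i =>
      elemInterval_subset_of_mem_intervalCofaces (Fintype.mem_piFinset.1 hmem i) (hx i)⟩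

theorem cubSet_mono (ω : Config d) {s t : ℝ} (hst : s ≤ t) : cubSet ω s ⊆ cubSet ω t :=
  Set.biUnion_subset_biUnion_left fun _ hQ => le_trans hQ hst

end Cofaces

section Box

variable {d : ℕ}

/-- The elementary cubes whose lower-left corner lies in `Λ_n`, a finite set containing all
elementary cubes in `Λ_n`. -/
def boxCubes (d n : ℕ) : Finset (ElemCube d) :=
  Fintype.piFinset fun _ => Finset.Icc (-(n : ℤ)) n ×ˢ Finset.univ

theorem card_boxCubes (d n : ℕ) : (boxCubes d n).card = (2 * (2 * n + 1)) ^ d := by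
  have hIcc : (n + 1 + n : ℤ).toNat = 2 * n + 1 := by lia
  simp [boxCubes, hIcc, mul_comm]

theorem card_boxCubes_le (d : ℕ) {n : ℕ} (hn : 1 ≤ n) :
    ((boxCubes d n).card : ℝ) ≤ 3 ^ d * (2 * n) ^ d := by
  rw [card_boxCubes, ← mul_pow]
  exact_mod_cast Nat.pow_le_pow_left (by lia) d

theorem mem_boxCubes_of_cubeSet_subset {n : ℕ} {Q : ElemCube d} (hQ : cubeSet Q ⊆ lambda d n) :
    Q ∈ boxCubes d n := by
  have hcorner : (fun i => ((Q i).1 : ℝ)) ∈ cubeSet Q :=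
    fun i => ⟨le_rfl, le_add_of_nonneg_right (by positivity)⟩
  refine Fintype.mem_piFinset.2 fun i => Finset.mem_product.2 ⟨?_, Finset.mem_univ _⟩
  obtain ⟨hlower, hupper⟩ : -(n : ℝ) ≤ (Q i).1 ∧ ((Q i).1 : ℝ) ≤ n := hQ hcorner i
  exact Finset.mem_Icc.2 ⟨by exact_mod_cast hlower, by exact_mod_cast hupper⟩

theorem cubesIn_inter_lambda_subset (k n : ℕ) (X : Set (Fin d → ℝ)) :
    cubesIn d k (X ∩ lambda d n) ⊆ boxCubes d n :=
  fun _ hQ => mem_boxCubes_of_cubeSet_subset (hQ.2.trans Set.inter_subset_right)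

theorem finite_cubesIn_inter_lambda (k n : ℕ) (X : Set (Fin d → ℝ)) :
    (cubesIn d k (X ∩ lambda d n)).Finite :=
  (boxCubes d n).finite_toSet.subset (cubesIn_inter_lambda_subset k n X)

theorem bettiN_le_card_boxCubes (q n : ℕ) (t : ℝ) (ω : Config d) :
    bettiN d q n t ω ≤ (boxCubes d n).card :=
  calc bettiN d q n t ω
      ≤ (cubesIn d q (cubSet ω t ∩ lambda d n)).ncard :=
        betti_le_ncard_cubesIn (finite_cubesIn_inter_lambda q n _)
    _ ≤ (boxCubes d n : Set (ElemCube d)).ncard :=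
        Set.ncard_le_ncard (cubesIn_inter_lambda_subset q n _)
    _ = (boxCubes d n).card := Set.ncard_coe_finset _

/-- The event that `Q` is contained in `X(t)` but not in `X(s)`. -/
def appearanceEvent (Q : ElemCube d) (s t : ℝ) : Set (Config d) :=
  {ω | cubeSet Q ⊆ cubSet ω t ∧ ¬ cubeSet Q ⊆ cubSet ω s}

open Classical in
theorem ncard_cubesIn_sdiff_le (k n : ℕ) (s t : ℝ) (ω : Config d) :
    ((cubesIn d k (cubSet ω t ∩ lambda d n) \ cubesIn d k (cubSet ω s ∩ lambda d n)).ncard : ℝ) ≤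
      ∑ Q ∈ boxCubes d n, (appearanceEvent Q s t).indicator 1 ω := by
  have hsub : cubesIn d k (cubSet ω t ∩ lambda d n) \ cubesIn d k (cubSet ω s ∩ lambda d n) ⊆
      ((boxCubes d n).filter fun Q => ω ∈ appearanceEvent Q s t : Finset (ElemCube d)) := by
    rintro Q ⟨hQt, hQs⟩
    obtain ⟨hX, hΛ⟩ := Set.subset_inter_iff.1 hQt.2
    exact Finset.mem_coe.2 <| Finset.mem_filter.2 ⟨mem_boxCubes_of_cubeSet_subset hΛ, hX,
      fun hXs => hQs ⟨hQt.1, Set.subset_inter hXs hΛ⟩⟩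
  have hcard := Set.ncard_le_ncard hsub
  rw [Set.ncard_coe_finset] at hcard
  calc _ ≤ (((boxCubes d n).filter fun Q => ω ∈ appearanceEvent Q s t).card : ℝ) := by
        exact_mod_cast hcard
    _ = _ := by
        simp only [Finset.natCast_card_filter, Set.indicator_apply, Pi.one_apply]

theorem abs_bettiN_sub_bettiN_le (q n : ℕ) {s t : ℝ} (hst : s ≤ t) (ω : Config d) :
    |(bettiN d q n t ω : ℝ) - bettiN d q n s ω| ≤
      ∑ Q ∈ boxCubes d n, (appearanceEvent Q s t).indicator 1 ω := by
  have hX : cubSet ω s ∩ lambda d n ⊆ cubSet ω t ∩ lambda d n :=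
    Set.inter_subset_inter_left _ (cubSet_mono ω hst)
  have hincrease := betti_le_betti_add_ncard_of_subset hX (finite_cubesIn_inter_lambda q n _)
  have hdecrease := betti_le_betti_add_ncard_succ_of_subset hX
    (finite_cubesIn_inter_lambda q n _) (finite_cubesIn_inter_lambda (q + 1) n _)
  rw [← Nat.cast_le (α := ℝ), Nat.cast_add] at hincrease hdecrease
  exact abs_sub_le_iff.2
    ⟨(sub_le_iff_le_add'.2 hincrease).trans (ncard_cubesIn_sdiff_le q n s t ω),
      (sub_le_iff_le_add'.2 hdecrease).trans (ncard_cubesIn_sdiff_le (q + 1) n s t ω)⟩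

end Box

section Measurability

theorem measurable_of_finitely_many_events {Ω ι β : Type*} [MeasurableSpace Ω] [MeasurableSpace β]
    [Nonempty β] [Finite ι] {A : ι → Set Ω} (hA : ∀ i, MeasurableSet (A i)) {f : Ω → β}
    (hf : ∀ ω ω', (∀ i, ω ∈ A i ↔ ω' ∈ A i) → f ω = f ω') : Measurable f := by
  have hfactor : Function.FactorsThrough f fun ω i => ω ∈ A i :=
    fun ω ω' h => hf ω ω' fun i => iff_of_eq (congrFun h i)
  obtain ⟨g, rfl⟩ := (Function.factorsThrough_iff f).1 hfactor
  have : Countable (ι → Prop) := Finite.to_countable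
  exact (measurable_of_finite g).comp
    (measurable_pi_iff.2 fun i => measurableSet_setOfPred.1 (hA i))

variable {d : ℕ}

theorem measurableSet_setOf_apply_le (Q : ElemCube d) (t : ℝ) :
    MeasurableSet {ω : Config d | (ω Q : ℝ) ≤ t} :=
  measurableSet_le (measurable_subtype_coe.comp (measurable_pi_apply Q)) measurable_const

theorem measurableSet_setOf_cubeSet_subset_cubSet (Q : ElemCube d) (t : ℝ) :
    MeasurableSet {ω : Config d | cubeSet Q ⊆ cubSet ω t} := by
  have heq : {ω : Config d | cubeSet Q ⊆ cubSet ω t} =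
      ⋃ Q' ∈ cofaces Q, {ω | (ω Q' : ℝ) ≤ t} := by
    ext ω
    simp only [cubeSet_subset_cubSet_iff, Set.mem_ofPred_eq, Set.mem_iUnion, exists_prop]
  rw [heq]
  exact Finset.measurableSet_biUnion _ fun Q' _ => measurableSet_setOf_apply_le Q' t

theorem measurableSet_appearanceEvent (Q : ElemCube d) (s t : ℝ) :
    MeasurableSet (appearanceEvent Q s t) :=
  (measurableSet_setOf_cubeSet_subset_cubSet Q t).inter
    (measurableSet_setOf_cubeSet_subset_cubSet Q s).compl

theorem measurable_bettiN (q n : ℕ) (t : ℝ) : Measurable (bettiN d q n t) := by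
  refine measurable_of_finitely_many_events (ι := boxCubes d n)
    (fun Q => measurableSet_setOf_cubeSet_subset_cubSet Q.1 t) fun ω ω' h => ?_
  have hcubes (k : ℕ) :
      cubesIn d k (cubSet ω t ∩ lambda d n) = cubesIn d k (cubSet ω' t ∩ lambda d n) := by
    ext Q
    simp only [cubesIn, Set.subset_inter_iff, Set.mem_ofPred_eq]
    exact and_congr_right fun _ => and_congr_left fun hΛ =>
      h ⟨Q, mem_boxCubes_of_cubeSet_subset hΛ⟩
  simp only [bettiN, betti_eq_homologyRank, chainsOn_eq_supported_cubesIn, hcubes]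

theorem integrable_bettiN (P : Measure (Config d)) [IsFiniteMeasure P] (q n : ℕ) (t : ℝ) :
    Integrable (fun ω => (bettiN d q n t ω : ℝ)) P :=
  .of_bound (measurable_from_nat.comp (measurable_bettiN q n t)).aestronglyMeasurable
    (boxCubes d n).card
    (.of_forall fun ω => by
      rw [Real.norm_natCast]
      exact_mod_cast bettiN_le_card_boxCubes q n t ω)

end Measurability

section Marginals

variable {d : ℕ} {P : Measure (Config d)}

/-- The marginal distribution function `F^Q(t) = P(ω_Q ≤ t)`. -/
def marginalCDF (P : Measure (Config d)) (Q : ElemCube d) (t : ℝ) : ℝ :=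
  P.real {ω | (ω Q : ℝ) ≤ t}

/-- The sum of the marginal distribution functions of the `2^d` elementary cubes with lower-left
corner at the origin; it controls every marginal of a stationary measure. -/
def totalCDF (P : Measure (Config d)) (t : ℝ) : ℝ :=
  ∑ σ : Fin d → Bool, marginalCDF P (fun i => (0, σ i)) t

theorem marginalCDF_mono [IsFiniteMeasure P] (Q : ElemCube d) : Monotone (marginalCDF P Q) :=
  fun _ _ hst => measureReal_mono fun _ hω => le_trans hω hst

theorem totalCDF_mono [IsFiniteMeasure P] : Monotone (totalCDF P) :=
  fun _ _ hst => Finset.sum_le_sum fun _ _ => marginalCDF_mono _ hst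

theorem marginalCDF_eq_of_stationary (hstat : Stationary P) (Q : ElemCube d) (t : ℝ) :
    marginalCDF P Q t = marginalCDF P (fun i => (0, (Q i).2)) t := by
  have htranslate : translateCube (-fun i => (Q i).1) Q = fun i => (0, (Q i).2) := by
    funext i
    simp [translateCube]
  have hshift := hstat (fun i => (Q i).1) _ (measurableSet_setOf_apply_le Q t)
  simp only [Set.preimage_ofPred_eq, configShift, htranslate] at hshift
  simp only [marginalCDF, Measure.real, hshift]

theorem marginalCDF_sub_le_totalCDF_sub [IsFiniteMeasure P] (hstat : Stationary P)
    (Q : ElemCube d) {s t : ℝ} (hst : s ≤ t) :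
    marginalCDF P Q t - marginalCDF P Q s ≤ totalCDF P t - totalCDF P s := by
  rw [marginalCDF_eq_of_stationary hstat Q t, marginalCDF_eq_of_stationary hstat Q s,
    totalCDF, totalCDF, ← Finset.sum_sub_distrib]
  exact Finset.single_le_sum (f := fun σ : Fin d → Bool =>
      marginalCDF P (fun i => (0, σ i)) t - marginalCDF P (fun i => (0, σ i)) s)
    (fun _ _ => sub_nonneg.2 (marginalCDF_mono _ hst)) (Finset.mem_univ fun i => (Q i).2)

theorem measureReal_setOf_lt_and_le [IsFiniteMeasure P] (Q : ElemCube d) {s t : ℝ} (hst : s ≤ t) :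
    P.real {ω | s < (ω Q : ℝ) ∧ (ω Q : ℝ) ≤ t} = marginalCDF P Q t - marginalCDF P Q s := by
  have hdiff : {ω : Config d | s < (ω Q : ℝ) ∧ (ω Q : ℝ) ≤ t} =
      {ω | (ω Q : ℝ) ≤ t} \ {ω | (ω Q : ℝ) ≤ s} := by
    ext ω
    simp [and_comm]
  have hsub : {ω : Config d | (ω Q : ℝ) ≤ s} ⊆ {ω | (ω Q : ℝ) ≤ t} :=
    fun _ hω => le_trans hω hst
  rw [hdiff, measureReal_sdiff hsub (measurableSet_setOf_apply_le Q s)]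
  rfl

theorem appearanceEvent_subset (Q : ElemCube d) (s t : ℝ) :
    appearanceEvent Q s t ⊆ ⋃ Q' ∈ cofaces Q, {ω | s < (ω Q' : ℝ) ∧ (ω Q' : ℝ) ≤ t} := by
  rintro ω ⟨hQt, hQs⟩
  rw [cubeSet_subset_cubSet_iff] at hQt hQs
  obtain ⟨Q', hmem, hle⟩ := hQt
  exact Set.mem_iUnion₂.2 ⟨Q', hmem, lt_of_not_ge fun hle' => hQs ⟨Q', hmem, hle'⟩, hle⟩

theorem measureReal_appearanceEvent_le [IsFiniteMeasure P] (hstat : Stationary P)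
    (Q : ElemCube d) {s t : ℝ} (hst : s ≤ t) :
    P.real (appearanceEvent Q s t) ≤ 3 ^ d * (totalCDF P t - totalCDF P s) :=
  calc P.real (appearanceEvent Q s t)
      ≤ P.real (⋃ Q' ∈ cofaces Q, {ω | s < (ω Q' : ℝ) ∧ (ω Q' : ℝ) ≤ t}) :=
        measureReal_mono (appearanceEvent_subset Q s t) (measure_ne_top P _)
    _ ≤ ∑ Q' ∈ cofaces Q, P.real {ω | s < (ω Q' : ℝ) ∧ (ω Q' : ℝ) ≤ t} :=
        measureReal_biUnion_finset_le _ _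
    _ ≤ ∑ _Q' ∈ cofaces Q, (totalCDF P t - totalCDF P s) :=
        Finset.sum_le_sum fun Q' _ => (measureReal_setOf_lt_and_le Q' hst).trans_le
          (marginalCDF_sub_le_totalCDF_sub hstat Q' hst)
    _ = (cofaces Q).card * (totalCDF P t - totalCDF P s) := by
        rw [Finset.sum_const, nsmul_eq_mul]
    _ ≤ 3 ^ d * (totalCDF P t - totalCDF P s) := by
        gcongr
        · exact sub_nonneg.2 (totalCDF_mono hst)
        · exact_mod_cast card_cofaces_le Q

end Marginals

section BettiDensity

variable {d : ℕ} {P : Measure (Config d)}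

/-- The normalized expected Betti number `|Λ_n|⁻¹ E[β_q^n(t)]`, whose upper limit is `betaHat`; it
is `0` for `n = 0 < d` because then `|Λ_n|⁻¹ = 0⁻¹ = 0`. -/
def bettiDensity (d q : ℕ) (P : Measure (Config d)) (t : ℝ) (n : ℕ) : ℝ :=
  ((2 * (n : ℝ)) ^ d)⁻¹ * ∫ ω, (bettiN d q n t ω : ℝ) ∂P

theorem bettiDensity_nonneg (q : ℕ) (P : Measure (Config d)) (t : ℝ) (n : ℕ) :
    0 ≤ bettiDensity d q P t n :=
  mul_nonneg (by positivity) (integral_nonneg fun _ => Nat.cast_nonneg _)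

theorem bettiDensity_le [IsFiniteMeasure P] (q : ℕ) (t : ℝ) {n : ℕ} (hn : 1 ≤ n) :
    bettiDensity d q P t n ≤ 3 ^ d * P.real Set.univ := by
  have hbound : ∫ ω, (bettiN d q n t ω : ℝ) ∂P ≤ (boxCubes d n).card * P.real Set.univ :=
    calc ∫ ω, (bettiN d q n t ω : ℝ) ∂P
        ≤ ∫ _ω, ((boxCubes d n).card : ℝ) ∂P :=
          integral_mono (integrable_bettiN P q n t) (integrable_const _)
            fun ω => Nat.cast_le.2 (bettiN_le_card_boxCubes q n t ω)
      _ = (boxCubes d n).card * P.real Set.univ := by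
          rw [integral_const, smul_eq_mul, mul_comm]
  rw [bettiDensity, inv_mul_le_iff₀ (by positivity)]
  calc ∫ ω, (bettiN d q n t ω : ℝ) ∂P
      ≤ (boxCubes d n).card * P.real Set.univ := hbound
    _ ≤ 3 ^ d * (2 * n) ^ d * P.real Set.univ := by gcongr; exact card_boxCubes_le d hn
    _ = (2 * n) ^ d * (3 ^ d * P.real Set.univ) := by ring

theorem abs_integral_bettiN_sub_le [IsFiniteMeasure P] (hstat : Stationary P) (q n : ℕ) {s t : ℝ}
    (hst : s ≤ t) :
    |∫ ω, (bettiN d q n t ω : ℝ) ∂P - ∫ ω, (bettiN d q n s ω : ℝ) ∂P| ≤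
      (boxCubes d n).card * (3 ^ d * (totalCDF P t - totalCDF P s)) := by
  have hint (Q : ElemCube d) :
      Integrable ((appearanceEvent Q s t).indicator (1 : Config d → ℝ)) P :=
    (integrable_const 1).indicator (measurableSet_appearanceEvent Q s t)
  have hint_sub := (integrable_bettiN P q n t).sub (integrable_bettiN P q n s)
  rw [← integral_sub (integrable_bettiN P q n t) (integrable_bettiN P q n s)]
  calc |∫ ω, ((bettiN d q n t ω : ℝ) - bettiN d q n s ω) ∂P|
      ≤ ∫ ω, |(bettiN d q n t ω : ℝ) - bettiN d q n s ω| ∂P := abs_integral_le_integral_abs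
    _ ≤ ∫ ω, ∑ Q ∈ boxCubes d n, (appearanceEvent Q s t).indicator 1 ω ∂P :=
        integral_mono hint_sub.abs (integrable_finsetSum _ fun Q _ => hint Q)
          fun ω => abs_bettiN_sub_bettiN_le q n hst ω
    _ = ∑ Q ∈ boxCubes d n, P.real (appearanceEvent Q s t) := by
        rw [integral_finsetSum _ fun Q _ => hint Q]
        exact Finset.sum_congr rfl fun Q _ =>
          integral_indicator_one (measurableSet_appearanceEvent Q s t)
    _ ≤ ∑ _Q ∈ boxCubes d n, 3 ^ d * (totalCDF P t - totalCDF P s) :=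
        Finset.sum_le_sum fun Q _ => measureReal_appearanceEvent_le hstat Q hst
    _ = (boxCubes d n).card * (3 ^ d * (totalCDF P t - totalCDF P s)) := by
        rw [Finset.sum_const, nsmul_eq_mul]

theorem abs_bettiDensity_sub_le [IsFiniteMeasure P] (hstat : Stationary P) (q : ℕ) {s t : ℝ}
    (hst : s ≤ t) {n : ℕ} (hn : 1 ≤ n) :
    |bettiDensity d q P t n - bettiDensity d q P s n| ≤
      9 ^ d * (totalCDF P t - totalCDF P s) := by
  have hnonneg : 0 ≤ totalCDF P t - totalCDF P s := sub_nonneg.2 (totalCDF_mono hst)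
  have hnine : (9 : ℝ) ^ d = 3 ^ d * 3 ^ d := by rw [← mul_pow]; norm_num
  rw [bettiDensity, bettiDensity, ← mul_sub, abs_mul, abs_of_nonneg (by positivity),
    inv_mul_le_iff₀ (by positivity)]
  calc |∫ ω, (bettiN d q n t ω : ℝ) ∂P - ∫ ω, (bettiN d q n s ω : ℝ) ∂P|
      ≤ (boxCubes d n).card * (3 ^ d * (totalCDF P t - totalCDF P s)) :=
        abs_integral_bettiN_sub_le hstat q n hst
    _ ≤ 3 ^ d * (2 * n) ^ d * (3 ^ d * (totalCDF P t - totalCDF P s)) := by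
        gcongr
        exact card_boxCubes_le d hn
    _ = (2 * n) ^ d * (9 ^ d * (totalCDF P t - totalCDF P s)) := by rw [hnine]; ring

end BettiDensity

section Limsup

theorem limsup_le_limsup_add_of_eventually_le {α : Type*} {l : Filter α} [l.NeBot] {u v : α → ℝ}
    {e : ℝ} (hu : l.IsCoboundedUnder (· ≤ ·) u) (hv : l.IsBoundedUnder (· ≤ ·) v)
    (hv' : l.IsCoboundedUnder (· ≤ ·) v) (huv : ∀ᶠ a in l, u a ≤ v a + e) :
    limsup u l ≤ limsup v l + e := by
  rw [← limsup_add_const l v e hv hv']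
  exact limsup_le_limsup huv hu (isBoundedUnder_le_add hv isBoundedUnder_const)

theorem abs_limsup_sub_limsup_le {α : Type*} {l : Filter α} [l.NeBot] {u v : α → ℝ} {e : ℝ}
    (hu : l.IsBoundedUnder (· ≤ ·) u) (hu' : l.IsCoboundedUnder (· ≤ ·) u)
    (hv : l.IsBoundedUnder (· ≤ ·) v) (hv' : l.IsCoboundedUnder (· ≤ ·) v)
    (huv : ∀ᶠ a in l, |u a - v a| ≤ e) :
    |limsup u l - limsup v l| ≤ e := by
  have huv_le := limsup_le_limsup_add_of_eventually_le hu' hv hv'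
    (huv.mono fun a ha => sub_le_iff_le_add'.1 (abs_sub_le_iff.1 ha).1)
  have hvu_le := limsup_le_limsup_add_of_eventually_le hv' hu hu'
    (huv.mono fun a ha => sub_le_iff_le_add'.1 (abs_sub_le_iff.1 ha).2)
  exact abs_sub_le_iff.2 ⟨sub_le_iff_le_add'.2 huv_le, sub_le_iff_le_add'.2 hvu_le⟩

end Limsup

section UniformContinuity

theorem uniformContinuousOn_of_dist_le_mul {α β γ : Type*} [UniformSpace α] [PseudoMetricSpace β]
    [PseudoMetricSpace γ] {f : α → β} {g : α → γ} {K : Set α} (C : ℝ)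
    (hg : UniformContinuousOn g K)
    (hfg : ∀ x ∈ K, ∀ y ∈ K, dist (f x) (f y) ≤ C * dist (g x) (g y)) :
    UniformContinuousOn f K := by
  rw [UniformContinuousOn, tendsto_uniformity_iff_dist_tendsto_zero] at hg ⊢
  refine squeeze_zero' (.of_forall fun _ => dist_nonneg) ?_ (by simpa using hg.const_mul C)
  exact eventually_inf_principal.2 (.of_forall fun p hp => hfg p.1 hp.1 p.2 hp.2)

variable {d : ℕ} {P : Measure (Config d)}

theorem isBoundedUnder_bettiDensity [IsFiniteMeasure P] (q : ℕ) (t : ℝ) :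
    atTop.IsBoundedUnder (· ≤ ·) (bettiDensity d q P t) :=
  isBoundedUnder_of_eventually_le
    ((eventually_ge_atTop 1).mono fun _ hn => bettiDensity_le q t hn)

theorem isCoboundedUnder_bettiDensity (q : ℕ) (t : ℝ) :
    atTop.IsCoboundedUnder (· ≤ ·) (bettiDensity d q P t) :=
  (isBoundedUnder_of_eventually_ge (.of_forall (bettiDensity_nonneg q P t))).isCoboundedUnder_le

theorem abs_betaHat_sub_le [IsFiniteMeasure P] (hstat : Stationary P) (q : ℕ) (s t : ℝ) :
    |betaHat d q P t - betaHat d q P s| ≤ 9 ^ d * |totalCDF P t - totalCDF P s| := by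
  wlog hst : s ≤ t generalizing s t
  · rw [abs_sub_comm, abs_sub_comm (totalCDF P t)]
    exact this t s (le_of_not_ge hst)
  rw [abs_of_nonneg (sub_nonneg.2 (totalCDF_mono hst))]
  exact abs_limsup_sub_limsup_le (isBoundedUnder_bettiDensity q t)
    (isCoboundedUnder_bettiDensity q t) (isBoundedUnder_bettiDensity q s)
    (isCoboundedUnder_bettiDensity q s)
    ((eventually_ge_atTop 1).mono fun _ hn => abs_bettiDensity_sub_le hstat q hst hn)

theorem betaHat_uniformContinuous_general [IsFiniteMeasure P] (q : ℕ) (hstat : Stationary P)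
    {K : Set ℝ} (hK : IsCompact K)
    (hcont : ∀ Q : ElemCube d, ContinuousOn (fun t => P.real {ω | (ω Q : ℝ) ≤ t}) K) :
    UniformContinuousOn (betaHat d q P) K := by
  have htotal : UniformContinuousOn (totalCDF P) K :=
    hK.uniformContinuousOn_of_continuous (continuousOn_finsetSum _ fun _ _ => hcont _)
  exact uniformContinuousOn_of_dist_le_mul (9 ^ d) htotal
    fun s _ t _ => abs_betaHat_sub_le hstat q t s

end UniformContinuity

/-- Fix `0 ≤ q < d` and let `P` be a stationary and ergodic probability
measure on `Ω = [0,1]^{K^d}` whose marginal distribution functions `F^Q(t) = P(ω_Q ≤ t)`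
are continuous on `[0,1]` for every elementary cube `Q`. Then
`β̂_q(t) = limsup_{n→∞} |Λ_n|⁻¹ E[β_q^n(t)]` is uniformly continuous on `[0,1]`. -/
theorem betaHat_uniformContinuous (d q : ℕ) (hq : q < d)
    (P : Measure (Config d)) [IsProbabilityMeasure P]
    (hstat : Stationary P) (herg : ErgodicConfig P)
    (hcont : ∀ Q : ElemCube d,
      ContinuousOn (fun t : ℝ => (P {ω : Config d | (ω Q : ℝ) ≤ t}).toReal)
        (Set.Icc (0 : ℝ) 1)) :
    UniformContinuousOn (fun t => betaHat d q P t) (Set.Icc (0 : ℝ) 1) := by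
  exact betaHat_uniformContinuous_general q hstat isCompact_Icc hcont

end
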